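/- Fix j ≥ 1, assume λ_1 > λ_2 > ⋯ > λ_j > λ_{j+1} ≥ λ_{j+2} ≥ ⋯ > 0, and assume ⟨ψ_0, φ_j⟩ ≠ 0. Let γ_j = (λ_j − λ_{j+1})/λ_{j+1}. Then there exists a constant C ≥ 0 such that for every k > j there exists φ̂ in the Krylov subspace K_k(T, ψ_0) = span{ψ_0, Tψ_0, …, T^{k−1}ψ_0} with ‖φ̂ − φ_j‖ ≤ C (1/(1 + 4γ_j))^k. (Convergence of the localized Krylov subspace iteration.) -/

import Mathlib

open scoped RealInnerProductSpace

/-!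
If `p` is a polynomial with `p(λ_j) = 1` and `|p(λ_i)| ≤ ε` for all `i ≠ j`, then, by Parseval,
`p(T) ψ₀` lies within `ε ‖ψ₀‖` of `⟪φ_j, ψ₀⟫ φ_j`, and it belongs to `K_k(T, ψ₀)` as soon as
`deg p < k`. Such a `p` is obtained by multiplying the polynomial that vanishes at the exceptional
eigenvalues `λ_1, …, λ_{j-1}` by a Chebyshev polynomial rescaled to an interval containing the
remaining ones: the latter is at most `1` on the interval and at least `(1 + 4γ)ⁿ / 2` at `λ_j`.
-/

open Polynomial Set

section RescaledChebyshev

/-- The Chebyshev polynomial `T_n` transported from `[-1, 1]` to `[a, b]` by the increasing affine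
map. The affine map is written relative to `b`, so that its value at `x` is `1 + 2γ` with
`γ = (x - b) / (b - a)` the relative distance of `x` to the interval. -/
noncomputable def rescaledChebyshev (a b : ℝ) (n : ℕ) : ℝ[X] :=
  (Chebyshev.T ℝ n).comp (C (2 / (b - a)) * (X - C b) + 1)

variable {a b x y : ℝ}

lemma eval_rescaledChebyshev (a b x : ℝ) (n : ℕ) :
    (rescaledChebyshev a b n).eval x = (Chebyshev.T ℝ n).eval (1 + 2 * ((x - b) / (b - a))) := by
  simp only [rescaledChebyshev, eval_comp, eval_add, eval_mul, eval_C, eval_sub, eval_X, eval_one]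
  ring_nf

lemma natDegree_rescaledChebyshev_le (a b : ℝ) (n : ℕ) :
    (rescaledChebyshev a b n).natDegree ≤ n := by
  have affine : (C (2 / (b - a)) * (X - C b) + 1 : ℝ[X]).natDegree ≤ 1 := by compute_degree
  calc (rescaledChebyshev a b n).natDegree
      ≤ (Chebyshev.T ℝ n).natDegree * 1 := natDegree_comp_le.trans (Nat.mul_le_mul_left _ affine)
    _ = n := by rw [mul_one, Chebyshev.natDegree_T, Int.natAbs_natCast]

lemma abs_eval_rescaledChebyshev_le_one (hab : a < b) (hy : y ∈ Icc a b) (n : ℕ) :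
    |(rescaledChebyshev a b n).eval y| ≤ 1 := by
  have hlower : -1 ≤ (y - b) / (b - a) := by
    rw [le_div_iff₀ (sub_pos.2 hab)]
    linarith [hy.1]
  have hupper : (y - b) / (b - a) ≤ 0 :=
    div_nonpos_of_nonpos_of_nonneg (sub_nonpos.2 hy.2) (sub_pos.2 hab).le
  rw [eval_rescaledChebyshev]
  apply Chebyshev.abs_eval_T_real_le_one
  rw [abs_le]
  constructor <;> linarith

lemma pow_le_two_mul_eval_chebyshev_T {g : ℝ} (hg : 0 ≤ g) (n : ℕ) :
    (1 + 4 * g) ^ n ≤ 2 * (Chebyshev.T ℝ n).eval (1 + 2 * g) := by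
  have hone : 1 ≤ 1 + 2 * g := by linarith
  set θ := Real.arcosh (1 + 2 * g)
  have hbase : 1 + 4 * g ≤ Real.exp θ := by
    have hsqrt : 2 * g ≤ √((1 + 2 * g) ^ 2 - 1) := Real.le_sqrt_of_sq_le (by nlinarith)
    rw [Real.exp_arcosh hone]
    linarith
  calc (1 + 4 * g) ^ n
      ≤ Real.exp θ ^ n := by gcongr
    _ = Real.exp (n * θ) := (Real.exp_nat_mul θ n).symm
    _ ≤ 2 * Real.cosh (n * θ) := by
      rw [Real.cosh_eq]
      linarith [Real.exp_pos (-(n * θ))]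
    _ = 2 * (Chebyshev.T ℝ n).eval (1 + 2 * g) := by
      rw [← Real.cosh_arcosh hone, Chebyshev.T_real_cosh, Int.cast_natCast]

lemma pow_le_two_mul_eval_rescaledChebyshev (hab : a < b) (hbx : b ≤ x) (n : ℕ) :
    (1 + 4 * ((x - b) / (b - a))) ^ n ≤ 2 * (rescaledChebyshev a b n).eval x := by
  rw [eval_rescaledChebyshev]
  exact pow_le_two_mul_eval_chebyshev_T
    (div_nonneg (sub_nonneg.2 hbx) (sub_pos.2 hab).le) n

lemma abs_eval_rescaledChebyshev_div_le (hab : a < b) (hy : y ∈ Icc a b) (hbx : b ≤ x) (n : ℕ) :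
    |(rescaledChebyshev a b n).eval y / (rescaledChebyshev a b n).eval x| ≤
      2 * (1 / (1 + 4 * ((x - b) / (b - a)))) ^ n := by
  have : 0 ≤ (x - b) / (b - a) := div_nonneg (sub_nonneg.2 hbx) (sub_pos.2 hab).le
  set R := 1 + 4 * ((x - b) / (b - a))
  have : 0 < R := by positivity
  have hlower : R ^ n / 2 ≤ (rescaledChebyshev a b n).eval x := by
    linarith [pow_le_two_mul_eval_rescaledChebyshev hab hbx n]
  rw [abs_div]
  calc |(rescaledChebyshev a b n).eval y| / |(rescaledChebyshev a b n).eval x|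
      ≤ 1 / (R ^ n / 2) := by
        gcongr
        · exact abs_eval_rescaledChebyshev_le_one hab hy n
        · exact hlower.trans (le_abs_self _)
    _ = 2 * (1 / R) ^ n := by rw [one_div_pow, one_div_div, mul_one_div]

lemma exists_dvd_eval_eq_one_abs_eval_le_on_Icc (q : ℝ[X]) (hab : a < b) (hbx : b ≤ x)
    (hq : q.eval x ≠ 0) :
    ∃ K : ℝ, 0 ≤ K ∧ ∀ k : ℕ, q.natDegree < k →
      ∃ p : ℝ[X], p.natDegree < k ∧ q ∣ p ∧ p.eval x = 1 ∧
        ∀ y ∈ Icc a b, |p.eval y| ≤ K * (1 / (1 + 4 * ((x - b) / (b - a)))) ^ k := by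
  have : 0 ≤ (x - b) / (b - a) := div_nonneg (sub_nonneg.2 hbx) (sub_pos.2 hab).le
  set R := 1 + 4 * ((x - b) / (b - a))
  have : 0 < R := by positivity
  obtain ⟨M, hM⟩ := isCompact_Icc.exists_bound_of_continuousOn (s := Icc a b) q.continuousOn
  have hM0 : 0 ≤ M := (norm_nonneg _).trans (hM a (left_mem_Icc.2 hab.le))
  refine ⟨M / |q.eval x| * 2 * R ^ (q.natDegree + 1), by positivity, fun k hk => ?_⟩
  obtain ⟨n, rfl⟩ := Nat.exists_eq_add_of_lt hk
  set t := rescaledChebyshev a b n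
  have htx : t.eval x ≠ 0 := by
    have hpow : 0 < R ^ n := by positivity
    linarith [pow_le_two_mul_eval_rescaledChebyshev hab hbx n]
  refine ⟨C (q.eval x * t.eval x)⁻¹ * (q * t), ?_, (dvd_mul_right q t).mul_left _, ?_,
    fun y hy => ?_⟩
  · refine Nat.lt_succ_of_le ((natDegree_C_mul_le _ _).trans (natDegree_mul_le.trans ?_))
    exact Nat.add_le_add_left (natDegree_rescaledChebyshev_le a b n) _
  · rw [eval_mul, eval_C, eval_mul, inv_mul_cancel₀ (mul_ne_zero hq htx)]
  · calc |(C (q.eval x * t.eval x)⁻¹ * (q * t)).eval y|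
        = |q.eval y| / |q.eval x| * |t.eval y / t.eval x| := by
          rw [eval_mul, eval_C, eval_mul, ← abs_div, ← abs_mul]
          ring_nf
      _ ≤ M / |q.eval x| * (2 * (1 / R) ^ n) := by
          gcongr
          · exact hM y hy
          · exact abs_eval_rescaledChebyshev_div_le hab hy hbx n
      _ = M / |q.eval x| * 2 * R ^ (q.natDegree + 1) * (1 / R) ^ (q.natDegree + n + 1) := by
          simp only [one_div, inv_pow]
          field_simp
          ring

end RescaledChebyshev

section KrylovSubspace

/-- The Krylov subspace `K_k(T, x) = span {x, T x, …, T^(k-1) x}`. -/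
def krylovSubspace {R M : Type*} [Semiring R] [TopologicalSpace M] [AddCommMonoid M] [Module R M]
    (T : M →L[R] M) (x : M) (k : ℕ) : Submodule R M :=
  Submodule.span R (range fun i : Fin k => (T ^ (i : ℕ)) x)

variable {R M : Type*} [CommRing R] [TopologicalSpace M] [AddCommGroup M] [Module R M]
  [IsTopologicalAddGroup M] [ContinuousConstSMul R M]

lemma aeval_apply_mem_krylovSubspace (T : M →L[R] M) (x : M) {p : R[X]} {k : ℕ}
    (hp : p.natDegree < k) : aeval T p x ∈ krylovSubspace T x k := by
  rw [aeval_eq_sum_range' hp, sum_apply]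
  refine Submodule.sum_mem _ fun i hi => ?_
  exact Submodule.smul_mem _ _ (Submodule.subset_span ⟨⟨i, Finset.mem_range.1 hi⟩, rfl⟩)

lemma aeval_apply_eq_eval_smul {T : M →L[R] M} {x : M} {μ : R} (hx : T x = μ • x) (p : R[X]) :
    aeval T p x = p.eval μ • x := by
  have hpow (n : ℕ) : (T ^ n) x = μ ^ n • x := by
    induction n with
    | zero => simp only [pow_zero, one_apply_eq_self, one_smul]
    | succ n ih =>
      rw [pow_succ', mul_apply_eq_comp, ih, map_smul, hx, smul_smul, ← pow_succ]
  simp only [aeval_eq_sum_range, eval_eq_sum_range, sum_apply, smul_apply,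
    hpow, smul_smul, Finset.sum_smul]

end KrylovSubspace

section EigenvectorBasis

variable {ι 𝕜 H : Type*} [RCLike 𝕜] [NormedAddCommGroup H] [InnerProductSpace 𝕜 H]

lemma hasSum_norm_inner_sq (φ : HilbertBasis ι 𝕜 H) (v : H) :
    HasSum (fun i => ‖inner 𝕜 (φ i) v‖ ^ 2) (‖v‖ ^ 2) := by
  simpa [φ.repr_apply_apply] using lp.hasSum_norm (by norm_num) (φ.repr v)

lemma norm_le_mul_norm_of_norm_inner_le (φ : HilbertBasis ι 𝕜 H) {v w : H} {ε : ℝ} (hε : 0 ≤ ε)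
    (h : ∀ i, ‖inner 𝕜 (φ i) v‖ ≤ ε * ‖inner 𝕜 (φ i) w‖) : ‖v‖ ≤ ε * ‖w‖ := by
  have hsq : ‖v‖ ^ 2 ≤ ε ^ 2 * ‖w‖ ^ 2 :=
    hasSum_le (fun i => (pow_le_pow_left₀ (norm_nonneg _) (h i) 2).trans_eq (mul_pow _ _ _))
      (hasSum_norm_inner_sq φ v) ((hasSum_norm_inner_sq φ w).mul_left _)
  exact le_of_sq_le_sq (hsq.trans_eq (mul_pow _ _ _).symm) (by positivity)

variable {φ : HilbertBasis ι 𝕜 H} {T : H →L[𝕜] H} {μ : ι → 𝕜}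

lemma inner_apply_eq_mul_inner_of_forall_apply_eq_smul (hT : ∀ i, T (φ i) = μ i • φ i) (i : ι)
    (v : H) : inner 𝕜 (φ i) (T v) = μ i * inner 𝕜 (φ i) v := by
  have hfunctionals : (innerSL 𝕜 (φ i)).comp T = μ i • innerSL 𝕜 (φ i) := by
    refine ContinuousLinearMap.ext_on
      (Submodule.dense_iff_topologicalClosure_eq_top.2 φ.dense_span) ?_
    rintro _ ⟨m, rfl⟩
    rcases eq_or_ne i m with rfl | him
    · simp [hT]
    · simp [hT, φ.orthonormal.inner_eq_zero him]
  exact DFunLike.congr_fun hfunctionals v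

lemma norm_aeval_apply_sub_inner_smul_le (hT : ∀ i, T (φ i) = μ i • φ i) {p : 𝕜[X]} {j : ι}
    (hpj : p.eval (μ j) = 1) {ε : ℝ} (hε : 0 ≤ ε) (hp : ∀ i ≠ j, ‖p.eval (μ i)‖ ≤ ε) (x : H) :
    ‖aeval T p x - inner 𝕜 (φ j) x • φ j‖ ≤ ε * ‖x‖ := by
  refine norm_le_mul_norm_of_norm_inner_le φ hε fun i => ?_
  have hcoeff : inner 𝕜 (φ i) (aeval T p x) = p.eval (μ i) * inner 𝕜 (φ i) x :=
    inner_apply_eq_mul_inner_of_forall_apply_eq_smul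
      (fun m => aeval_apply_eq_eval_smul (hT m) p) i x
  rw [inner_sub_right, inner_smul_right, hcoeff]
  rcases eq_or_ne i j with rfl | hij
  · rw [hpj, inner_self_eq_one_of_norm_eq_one (φ.orthonormal.1 i), mul_one, one_mul, sub_self,
      norm_zero]
    positivity
  · rw [φ.orthonormal.inner_eq_zero hij, mul_zero, sub_zero, norm_mul]
    exact mul_le_mul_of_nonneg_right (hp i hij) (norm_nonneg _)

lemma exists_mem_krylovSubspace_norm_sub_le (hT : ∀ i, T (φ i) = μ i • φ i) {x : H} {j : ι}
    (hx : inner 𝕜 (φ j) x ≠ 0) {p : 𝕜[X]} {k : ℕ} (hdeg : p.natDegree < k)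
    (hpj : p.eval (μ j) = 1) {ε : ℝ} (hε : 0 ≤ ε) (hp : ∀ i ≠ j, ‖p.eval (μ i)‖ ≤ ε) :
    ∃ v ∈ krylovSubspace T x k, ‖v - φ j‖ ≤ ‖x‖ / ‖inner 𝕜 (φ j) x‖ * ε := by
  set c := inner 𝕜 (φ j) x
  refine ⟨c⁻¹ • aeval T p x, Submodule.smul_mem _ _ (aeval_apply_mem_krylovSubspace T x hdeg), ?_⟩
  calc ‖c⁻¹ • aeval T p x - φ j‖
      = ‖c‖⁻¹ * ‖aeval T p x - c • φ j‖ := by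
        rw [← norm_inv, ← norm_smul, smul_sub, inv_smul_smul₀ hx]
    _ ≤ ‖c‖⁻¹ * (ε * ‖x‖) := by
        gcongr
        exact norm_aeval_apply_sub_inner_smul_le hT hpj hε hp x
    _ = ‖x‖ / ‖c‖ * ε := by ring

end EigenvectorBasis

theorem stmt_3_general {ι 𝕜 H : Type*} [RCLike 𝕜] [NormedAddCommGroup H] [InnerProductSpace 𝕜 H]
    (T : H →L[𝕜] H) (φ : HilbertBasis ι 𝕜 H) (lam : ι → ℝ)
    (heig : ∀ i, T (φ i) = (lam i : 𝕜) • φ i) (x : H) (j : ι) (hx : inner 𝕜 (φ j) x ≠ 0)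
    (s : Finset ι) (hs : ∀ i ∈ s, lam i ≠ lam j) {a b : ℝ} (hab : a < b) (hbj : b ≤ lam j)
    (htail : ∀ i ∉ s, i ≠ j → lam i ∈ Icc a b) :
    ∃ K : ℝ, 0 ≤ K ∧ ∀ k : ℕ, s.card < k →
      ∃ v ∈ krylovSubspace T x k,
        ‖v - φ j‖ ≤ K * (1 / (1 + 4 * ((lam j - b) / (b - a)))) ^ k := by
  set q : ℝ[X] := ∏ i ∈ s, (X - C (lam i)) with hq
  have hqj : q.eval (lam j) ≠ 0 := by
    simpa only [hq, eval_prod, eval_sub, eval_X, eval_C, Finset.prod_ne_zero_iff, sub_ne_zero]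
      using fun i hi => (hs i hi).symm
  obtain ⟨K, hK, hp⟩ := exists_dvd_eval_eq_one_abs_eval_le_on_Icc q hab hbj hqj
  refine ⟨‖x‖ / ‖inner 𝕜 (φ j) x‖ * K, by positivity, fun k hk => ?_⟩
  rw [← natDegree_finsetProd_X_sub_C_eq_card s lam] at hk
  obtain ⟨p, hdeg, hqp, hpj, hpbound⟩ := hp k hk
  have heval (i : ι) : (p.map (algebraMap ℝ 𝕜)).eval (lam i : 𝕜) = ((p.eval (lam i) : ℝ) : 𝕜) :=
    eval_map_apply (algebraMap ℝ 𝕜) (lam i)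
  have : 0 ≤ (lam j - b) / (b - a) := div_nonneg (sub_nonneg.2 hbj) (sub_pos.2 hab).le
  rw [mul_assoc]
  refine exists_mem_krylovSubspace_norm_sub_le heig hx (p := p.map (algebraMap ℝ 𝕜))
    (natDegree_map_le.trans_lt hdeg) (by rw [heval, hpj, RCLike.ofReal_one]) (by positivity)
    fun i hij => ?_
  rw [heval, RCLike.norm_ofReal]
  by_cases hi : i ∈ s
  · have hroot : p.eval (lam i) = 0 :=
      eval_eq_zero_of_dvd_of_eval_eq_zero ((Finset.dvd_prod_of_mem _ hi).trans hqp) (by simp)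
    rw [hroot, abs_zero]
    positivity
  · exact hpbound _ (htail i hi hij)

/-- Convergence of the localized Krylov subspace iteration: if the leading
eigenvalues are simple down to the target index `j` (indexed from `0`) and the
initial vector `ψ0` has a nonzero component along `φ j`, then the Krylov spaces
contain approximations of `φ j` with error `C (1/(1+4γ_j))ᵏ`, where
`γ_j = (λ_j - λ_{j+1})/λ_{j+1}`. -/
theorem stmt_3 {H : Type*} [NormedAddCommGroup H] [InnerProductSpace ℝ H] [CompleteSpace H]
    (T : H →L[ℝ] H) (hTsa : IsSelfAdjoint T) (hTc : IsCompactOperator ⇑T)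
    (φ : HilbertBasis ℕ ℝ H) (lam : ℕ → ℝ)
    (heig : ∀ j, T (φ j) = lam j • φ j) (hpos : ∀ j, 0 < lam j) (hmono : Antitone lam)
    (ψ0 : H) (j : ℕ)
    (hstrict : ∀ m ≤ j, lam (m + 1) < lam m)
    (hcomp : ⟪ψ0, φ j⟫ ≠ 0) :
    ∃ C : ℝ, 0 ≤ C ∧ ∀ k : ℕ, j < k →
      ∃ φhat ∈ Submodule.span ℝ (Set.range fun i : Fin k => (T ^ (i : ℕ)) ψ0),
        ‖φhat - φ j‖ ≤ C * (1 / (1 + 4 * ((lam j - lam (j + 1)) / lam (j + 1)))) ^ k := by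
  have hlt (i : ℕ) (hi : i ∈ Finset.range j) : lam j < lam i :=
    (hmono (Finset.mem_range.1 hi)).trans_lt (hstrict i (Finset.mem_range.1 hi).le)
  simpa only [krylovSubspace, sub_zero, Finset.card_range] using
    stmt_3_general T φ lam heig ψ0 j (by rwa [real_inner_comm]) (Finset.range j)
    (fun i hi => (hlt i hi).ne') (hpos (j + 1)) (hstrict j le_rfl).le
    fun i hi hij => ⟨(hpos i).le, hmono (by grind)⟩
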